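/- Let Φ_1, …, Φ_k ∈ ℂ^{p×p} be given matrices (playing the role of f_j(M) for an invariant pair (V, M)), let V ∈ ℂ^{n×p}, R = Σ_{j=1}^k F_j V Φ_j, and Ĝ = [Φ_1^T, …, Φ_k^T] ∈ ℂ^{p×kp}. Assume each coefficient F_j lies in a linear subspace 𝒮_j with Frobenius-orthonormal basis P^{(1,j)}, …, P^{(d_j,j)}. Then the structured backward error η_𝒮 := min{ ‖[δF_1, …, δF_k]‖_F : δF_j ∈ 𝒮_j and Σ_{j=1}^k (F_j + δF_j) V Φ_j = 0 } satisfies η_𝒮 = ‖[((Ĝ (I_k ⊗ V^T)) ⊗ I_n) P]† vec(R)‖₂, and consequently η_𝒮 ≤ σ_min(((Ĝ (I_k ⊗ V^T)) ⊗ I_n) P)^{−1} ‖R‖_F. -/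

import Mathlib

open Matrix Kronecker BigOperators

noncomputable section

/-- Frobenius norm of a complex matrix. -/
def fnorm {ι κ : Type*} [Fintype ι] [Fintype κ] (A : Matrix ι κ ℂ) : ℝ :=
  Real.sqrt (∑ i, ∑ j, ‖A i j‖ ^ 2)

/-- Euclidean norm of a complex vector. -/
def vnorm {ι : Type*} [Fintype ι] (v : ι → ℂ) : ℝ :=
  Real.sqrt (∑ i, ‖v i‖ ^ 2)

/-- The four Moore–Penrose conditions. -/
def IsMoorePenrose {ι κ : Type*} [Fintype ι] [Fintype κ]
    (A : Matrix ι κ ℂ) (B : Matrix κ ι ℂ) : Prop :=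
  A * B * A = A ∧ B * A * B = B ∧ (A * B)ᴴ = A * B ∧ (B * A)ᴴ = B * A

open scoped Classical in
/-- The Moore–Penrose pseudoinverse (defined by choice; it always exists and is unique). -/
noncomputable def pinv {ι κ : Type*} [Fintype ι] [Fintype κ] (A : Matrix ι κ ℂ) :
    Matrix κ ι ℂ :=
  if h : ∃ B, IsMoorePenrose A B then h.choose else 0

/-- `s` is a singular value of `A`: `s ≥ 0` and `s²` is an eigenvalue of `Aᴴ A`. -/
def IsSingularValue {ι κ : Type*} [Fintype ι] [Fintype κ] (A : Matrix ι κ ℂ) (s : ℝ) : Prop :=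
  0 ≤ s ∧ ∃ w : κ → ℂ, w ≠ 0 ∧ (Aᴴ * A).mulVec w = ((s : ℂ) ^ 2) • w

/-- The smallest nonzero singular value of `A`, i.e. `σ_p̂(A)` where `p̂ = rank A`. -/
noncomputable def sigmaMinPos {ι κ : Type*} [Fintype ι] [Fintype κ] (A : Matrix ι κ ℂ) : ℝ :=
  sInf {s : ℝ | IsSingularValue A s ∧ 0 < s}

/-- The smallest singular value of a square matrix `A`, the minimum of `‖A v‖₂` over
unit vectors `v`. -/
noncomputable def sigmaMinSq {n : ℕ} (A : Matrix (Fin n) (Fin n) ℂ) : ℝ :=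
  sInf {x : ℝ | ∃ w : Fin n → ℂ, vnorm w = 1 ∧ x = vnorm (A.mulVec w)}

/-- The transposed Khatri–Rao product `G ⊙^T W` of `G : p × k` and `W : p × n`:
the `p × kn` matrix whose `i`-th row is `[G i 1 • (row i of W), …, G i k • (row i of W)]`. -/
def krt {p k n : ℕ} (G : Matrix (Fin p) (Fin k) ℂ) (W : Matrix (Fin p) (Fin n) ℂ) :
    Matrix (Fin p) (Fin k × Fin n) ℂ :=
  Matrix.of fun i jl => G i jl.1 * W i jl.2

/-!
Let `A = ((Ĝ (I ⊗ Vᵀ)) ⊗ I) P`. Expanding each `δFⱼ` in its orthonormal basis gives a coefficient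
vector `c` with `‖[δF₁, …, δFₖ]‖_F = ‖c‖₂`, and vectorization turns the constraint into
`A c = -vec R`. The structured backward error is therefore the norm of the minimum-norm solution
`-A† vec R`, minimal because `A† A` is an orthogonal projection.

For the upper bound, `A† (A†)ᴴ = (Aᴴ A)†`, and the pseudoinverse of a Hermitian matrix is its
functional calculus at `t ↦ t⁻¹`, the convention `0⁻¹ = 0` being exactly what is needed on the
kernel. Hence `‖A†‖²` is at most the largest `t⁻¹` over the nonzero spectrum of `Aᴴ A`.
-/

section MoorePenrose

variable {ι κ : Type*} [Fintype ι] [Fintype κ]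

namespace IsMoorePenrose

variable {A : Matrix ι κ ℂ} {B C : Matrix κ ι ℂ}

theorem conjTranspose (h : IsMoorePenrose A B) : IsMoorePenrose Aᴴ Bᴴ := by
  obtain ⟨hABA, hBAB, hAB, hBA⟩ := h
  refine ⟨?_, ?_, ?_, ?_⟩
  · rw [← conjTranspose_mul, ← conjTranspose_mul, ← Matrix.mul_assoc, hABA]
  · rw [← conjTranspose_mul, ← conjTranspose_mul, ← Matrix.mul_assoc, hBAB]
  · rw [← conjTranspose_mul, hBA, hBA]
  · rw [← conjTranspose_mul, hAB, hAB]

theorem mul_right_unique (hB : IsMoorePenrose A B) (hC : IsMoorePenrose A C) :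
    A * B = A * C := by
  obtain ⟨hABA, -, hAB, -⟩ := hB
  obtain ⟨hACA, -, hAC, -⟩ := hC
  calc A * B = (A * C * (A * B))ᴴ := by rw [← Matrix.mul_assoc, hACA, hAB]
    _ = A * B * (A * C) := by rw [conjTranspose_mul, hAB, hAC]
    _ = A * C := by rw [← Matrix.mul_assoc, hABA]

theorem mul_left_unique (hB : IsMoorePenrose A B) (hC : IsMoorePenrose A C) :
    B * A = C * A :=
  conjTranspose_injective <| by
    simpa only [conjTranspose_mul] using hB.conjTranspose.mul_right_unique hC.conjTranspose

theorem unique (hB : IsMoorePenrose A B) (hC : IsMoorePenrose A C) : B = C :=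
  calc B = B * A * B := hB.2.1.symm
    _ = C * A * C := by
      rw [hB.mul_left_unique hC, Matrix.mul_assoc, hB.mul_right_unique hC, ← Matrix.mul_assoc]
    _ = C := hC.2.1

theorem isHermitian {H G : Matrix κ κ ℂ} (hH : H.IsHermitian) (h : IsMoorePenrose H G) :
    G.IsHermitian :=
  unique (hH.eq ▸ h.conjTranspose) h

open scoped ComplexOrder in
theorem mul_conjTranspose {G : Matrix κ κ ℂ} (h : IsMoorePenrose (Aᴴ * A) G) :
    IsMoorePenrose A (G * Aᴴ) := by
  classical
  have hG : Gᴴ = G := h.isHermitian (isHermitian_conjTranspose_mul_self A)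
  obtain ⟨hHGH, hGHG, -, hGH⟩ := h
  have hAGH : A * (G * (Aᴴ * A)) = A := by
    have hH : Aᴴ * A * (G * (Aᴴ * A) - 1) = 0 := by
      rw [Matrix.mul_sub, ← Matrix.mul_assoc, hHGH, Matrix.mul_one, sub_self]
    rwa [conjTranspose_mul_self_mul_eq_zero, Matrix.mul_sub, Matrix.mul_one, sub_eq_zero] at hH
  refine ⟨by simpa only [Matrix.mul_assoc] using hAGH, ?_, ?_, by rwa [Matrix.mul_assoc]⟩
  · rw [Matrix.mul_assoc G Aᴴ A, ← Matrix.mul_assoc _ G, hGHG]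
  · simp only [conjTranspose_mul, conjTranspose_conjTranspose, hG, Matrix.mul_assoc]

end IsMoorePenrose

theorem isMoorePenrose_cfc_inv [DecidableEq κ] {H : Matrix κ κ ℂ} (hH : H.IsHermitian) :
    IsMoorePenrose H (cfc (·⁻¹ : ℝ → ℝ) H) := by
  have hsa : IsSelfAdjoint H := hH
  have hcont (f : ℝ → ℝ) : ContinuousOn f (spectrum ℝ H) := H.finite_real_spectrum.continuousOn f
  have hmul (f g : ℝ → ℝ) : cfc f H * cfc g H = cfc (fun t => f t * g t) H :=
    (cfc_mul f g H (hcont f) (hcont g)).symm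
  have hherm (f : ℝ → ℝ) : (cfc f H)ᴴ = cfc f H := cfc_predicate (p := IsSelfAdjoint) f H
  have hinv (t : ℝ) : t⁻¹ * t * t⁻¹ = t⁻¹ := by simpa using mul_inv_mul_cancel t⁻¹
  nth_rw 1 [← cfc_id' ℝ H]
  simp only [IsMoorePenrose, hmul, hherm, mul_inv_mul_cancel, hinv, and_self]

theorem exists_isMoorePenrose (A : Matrix ι κ ℂ) : ∃ B, IsMoorePenrose A B := by
  classical
  exact ⟨_, (isMoorePenrose_cfc_inv (isHermitian_conjTranspose_mul_self A)).mul_conjTranspose⟩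

theorem isMoorePenrose_pinv (A : Matrix ι κ ℂ) : IsMoorePenrose A (pinv A) := by
  have h := exists_isMoorePenrose A
  rw [pinv, dif_pos h]
  exact h.choose_spec

theorem pinv_eq_cfc_inv [DecidableEq κ] {H : Matrix κ κ ℂ} (hH : H.IsHermitian) :
    pinv H = cfc (·⁻¹ : ℝ → ℝ) H :=
  (isMoorePenrose_pinv H).unique (isMoorePenrose_cfc_inv hH)

theorem pinv_mul_conjTranspose_pinv (A : Matrix ι κ ℂ) :
    pinv A * (pinv A)ᴴ = pinv (Aᴴ * A) := by
  set G := pinv (Aᴴ * A)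
  have hG : IsMoorePenrose (Aᴴ * A) G := isMoorePenrose_pinv _
  rw [(isMoorePenrose_pinv A).unique hG.mul_conjTranspose, conjTranspose_mul,
    conjTranspose_conjTranspose, (hG.isHermitian (isHermitian_conjTranspose_mul_self A)).eq,
    Matrix.mul_assoc, ← Matrix.mul_assoc Aᴴ, ← Matrix.mul_assoc, hG.2.1]

end MoorePenrose

section SingularValues

variable {ι κ : Type*} [Fintype ι] [Fintype κ] [DecidableEq κ]

theorem isSingularValue_iff {A : Matrix ι κ ℂ} {s : ℝ} :
    IsSingularValue A s ↔ 0 ≤ s ∧ s ^ 2 ∈ spectrum ℝ (Aᴴ * A) := by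
  rw [IsSingularValue, ← spectrum.algebraMap_mem_iff ℂ, ← Matrix.spectrum_toLin',
    ← Module.End.hasEigenvalue_iff_mem_spectrum]
  refine and_congr_right fun _ => ⟨?_, fun h => ?_⟩
  · rintro ⟨w, hw, hAw⟩
    exact Module.End.hasEigenvalue_of_hasEigenvector (x := w)
      ⟨Module.End.mem_eigenspace_iff.2 (by simpa using hAw), hw⟩
  · obtain ⟨w, hw⟩ := h.exists_hasEigenvector
    exact ⟨w, hw.2, by simpa using hw.apply_eq_smul⟩

theorem sigmaMinPos_pos_and_sq_le {A : Matrix ι κ ℂ} {t : ℝ} (ht : t ∈ spectrum ℝ (Aᴴ * A))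
    (htpos : 0 < t) : 0 < sigmaMinPos A ∧ sigmaMinPos A ^ 2 ≤ t := by
  have hsqrt : √t ∈ {s : ℝ | IsSingularValue A s ∧ 0 < s} :=
    ⟨isSingularValue_iff.2 ⟨t.sqrt_nonneg, by rwa [Real.sq_sqrt htpos.le]⟩, Real.sqrt_pos.2 htpos⟩
  have hfin : {s : ℝ | IsSingularValue A s ∧ 0 < s}.Finite := by
    refine ((Aᴴ * A).finite_real_spectrum.image Real.sqrt).subset fun s hs => ?_
    exact ⟨s ^ 2, (isSingularValue_iff.1 hs.1).2, Real.sqrt_sq hs.2.le⟩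
  have hpos : 0 < sigmaMinPos A := (Set.Nonempty.csInf_mem ⟨_, hsqrt⟩ hfin).2
  exact ⟨hpos, (Real.le_sqrt hpos.le htpos.le).1 (csInf_le hfin.bddBelow hsqrt)⟩

end SingularValues

section PinvNorm

open scoped ComplexOrder Matrix.Norms.L2Operator

variable {ι κ : Type*} [Fintype ι] [Fintype κ] [DecidableEq ι]

theorem l2_opNorm_pinv_le (A : Matrix ι κ ℂ) : ‖pinv A‖ ≤ (sigmaMinPos A)⁻¹ := by
  classical
  have hA : (Aᴴ * A).PosSemidef := posSemidef_conjTranspose_mul_self A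
  have hinv : ∀ t ∈ spectrum ℝ (Aᴴ * A), ‖t⁻¹‖ ≤ (sigmaMinPos A)⁻¹ ^ 2 := fun t ht => by
    have ht0 : 0 ≤ t := by
      obtain ⟨i, rfl⟩ := hA.isHermitian.spectrum_real_eq_range_eigenvalues ▸ ht
      exact hA.eigenvalues_nonneg i
    obtain rfl | htpos := ht0.eq_or_lt
    · simpa using sq_nonneg (sigmaMinPos A)⁻¹
    · obtain ⟨hpos, hle⟩ := sigmaMinPos_pos_and_sq_le ht htpos
      rw [Real.norm_of_nonneg (inv_nonneg.2 ht0), inv_pow]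
      gcongr
  have hσ : 0 ≤ (sigmaMinPos A)⁻¹ := inv_nonneg.2 <| Real.sInf_nonneg fun _ hs => hs.2.le
  refine le_of_sq_le_sq ?_ hσ
  calc ‖pinv A‖ ^ 2 = ‖pinv A * (pinv A)ᴴ‖ := by
        rw [← l2_opNorm_conjTranspose, sq, ← l2_opNorm_conjTranspose_mul_self,
          conjTranspose_conjTranspose]
    _ = ‖cfc (·⁻¹ : ℝ → ℝ) (Aᴴ * A)‖ := by
        rw [pinv_mul_conjTranspose_pinv, pinv_eq_cfc_inv hA.isHermitian]
    _ ≤ (sigmaMinPos A)⁻¹ ^ 2 := norm_cfc_le (sq_nonneg _) hinv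

end PinvNorm

section EuclideanNorm

variable {ι κ : Type*} [Fintype ι] [Fintype κ]

theorem vnorm_eq_norm_toLp (v : ι → ℂ) : vnorm v = ‖WithLp.toLp 2 v‖ :=
  (EuclideanSpace.norm_eq _).symm

theorem vnorm_neg (v : ι → ℂ) : vnorm (-v) = vnorm v := by
  simp only [vnorm, Pi.neg_apply, norm_neg]

theorem fnorm_eq_vnorm_vec (A : Matrix ι κ ℂ) : fnorm A = vnorm (vec A) := by
  rw [fnorm, vnorm, Fintype.sum_prod_type_right]
  rfl

theorem ofReal_vnorm_sq (v : ι → ℂ) : (vnorm v : ℂ) ^ 2 = star v ⬝ᵥ v := by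
  rw [vnorm_eq_norm_toLp, dotProduct_comm, ← EuclideanSpace.inner_toLp_toLp]
  exact (inner_self_eq_norm_sq_to_K (𝕜 := ℂ) (WithLp.toLp 2 v)).symm

theorem vnorm_mulVec_of_conjTranspose_mul_self_eq_one [DecidableEq κ] {U : Matrix ι κ ℂ}
    (hU : Uᴴ * U = 1) (c : κ → ℂ) : vnorm (U *ᵥ c) = vnorm c := by
  suffices vnorm (U *ᵥ c) ^ 2 = vnorm c ^ 2 from
    (sq_eq_sq₀ (Real.sqrt_nonneg _) (Real.sqrt_nonneg _)).1 this
  apply Complex.ofReal_injective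
  rw [Complex.ofReal_pow, Complex.ofReal_pow, ofReal_vnorm_sq, ofReal_vnorm_sq, star_mulVec,
    ← dotProduct_mulVec, mulVec_mulVec, hU, one_mulVec]

open scoped Matrix.Norms.L2Operator

theorem vnorm_mulVec_le [DecidableEq κ] (A : Matrix ι κ ℂ) (c : κ → ℂ) :
    vnorm (A *ᵥ c) ≤ ‖A‖ * vnorm c := by
  rw [vnorm_eq_norm_toLp, vnorm_eq_norm_toLp]
  exact l2_opNorm_mulVec A (WithLp.toLp 2 c)

theorem vnorm_pinv_mul_mulVec_le (A : Matrix ι κ ℂ) (c : κ → ℂ) :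
    vnorm ((pinv A * A) *ᵥ c) ≤ vnorm c := by
  classical
  obtain ⟨-, hBAB, -, hBA⟩ := isMoorePenrose_pinv A
  have hproj : IsStarProjection (pinv A * A) :=
    ⟨by rw [IsIdempotentElem, ← Matrix.mul_assoc, hBAB], hBA⟩
  calc vnorm ((pinv A * A) *ᵥ c) ≤ ‖pinv A * A‖ * vnorm c := vnorm_mulVec_le _ c
    _ ≤ vnorm c := mul_le_of_le_one_left (Real.sqrt_nonneg _) hproj.norm_le

theorem vnorm_pinv_mulVec_le (A : Matrix ι κ ℂ) (b : ι → ℂ) :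
    vnorm (pinv A *ᵥ b) ≤ (sigmaMinPos A)⁻¹ * vnorm b := by
  classical
  exact (vnorm_mulVec_le _ b).trans <|
    mul_le_mul_of_nonneg_right (l2_opNorm_pinv_le A) (Real.sqrt_nonneg _)

theorem isLeast_vnorm_pinv_mulVec {A : Matrix ι κ ℂ} {b : ι → ℂ} (hb : ∃ c, A *ᵥ c = b) :
    IsLeast (vnorm '' {c | A *ᵥ c = b}) (vnorm (pinv A *ᵥ b)) := by
  obtain ⟨c₀, rfl⟩ := hb
  refine ⟨⟨_, ?_, rfl⟩, ?_⟩
  · change A *ᵥ (pinv A *ᵥ (A *ᵥ c₀)) = A *ᵥ c₀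
    rw [mulVec_mulVec, mulVec_mulVec, (isMoorePenrose_pinv A).1]
  · rintro _ ⟨c, hc, rfl⟩
    rw [← hc, mulVec_mulVec]
    exact vnorm_pinv_mul_mulVec_le A c

end EuclideanNorm

section BlockRow

variable {J m n q s R : Type*}

/-- The horizontal concatenation `[E₁, …, Eₖ]`; its columns are indexed by pairs
(block, column within the block). -/
def blockRow (E : J → Matrix m n R) : Matrix m (J × n) R :=
  Matrix.of fun i jl => E jl.1 i jl.2

variable [Fintype J] [Fintype n]

theorem blockRow_mul_one_kronecker [DecidableEq J] [Semiring R] (G : J → Matrix m n R)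
    (W : Matrix n q R) :
    blockRow G * ((1 : Matrix J J R) ⊗ₖ W) = blockRow fun j => G j * W := by
  ext i ⟨j, l⟩
  simp [blockRow, Matrix.mul_apply, Fintype.sum_prod_type, Matrix.one_apply]

theorem blockRow_mul_transpose_blockRow [NonUnitalNonAssocSemiring R] (E : J → Matrix m n R)
    (G : J → Matrix s n R) : blockRow E * (blockRow G)ᵀ = ∑ j, E j * (G j)ᵀ := by
  ext i l
  simp [blockRow, Matrix.mul_apply, Fintype.sum_prod_type, Matrix.sum_apply]

theorem kronecker_one_mulVec_vec_blockRow [DecidableEq J] [Fintype m] [DecidableEq m] [Fintype q]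
    [CommSemiring R] (Φ : J → Matrix q s R) (V : Matrix n q R) (E : J → Matrix m n R) :
    ((blockRow (fun j => (Φ j)ᵀ) * ((1 : Matrix J J R) ⊗ₖ Vᵀ)) ⊗ₖ (1 : Matrix m m R)) *ᵥ
      vec (blockRow E) = vec (∑ j, E j * V * Φ j) := by
  rw [kronecker_mulVec_vec, Matrix.one_mul, blockRow_mul_one_kronecker,
    blockRow_mul_transpose_blockRow]
  simp only [transpose_mul, transpose_transpose, Matrix.mul_assoc]

end BlockRow

section VecBasis

variable {J m n R : Type*} [DecidableEq J] {d : J → Type*}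

/-- The block diagonal matrix `blockdiag(P⁽¹⁾, …, P⁽ᵏ⁾)`, where the columns of `P⁽ʲ⁾` are the
vectors `vec (P j a)`. Its rows are indexed as the entries of `vec (blockRow E)`. -/
def vecBasis [Zero R] (P : ∀ j, d j → Matrix m n R) : Matrix ((J × n) × m) ((j : J) × d j) R :=
  Matrix.of fun x c => if x.1.1 = c.1 then P c.1 c.2 x.2 x.1.2 else 0

theorem conjTranspose_vecBasis_mul_vecBasis [Fintype J] [Fintype m] [Fintype n]
    [∀ j, DecidableEq (d j)] {P : ∀ j, d j → Matrix m n ℂ}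
    (hP : ∀ j a b, ∑ i, ∑ l, (starRingEnd ℂ) (P j a i l) * P j b i l = if a = b then 1 else 0) :
    (vecBasis P)ᴴ * vecBasis P = 1 := by
  ext ⟨j, a⟩ ⟨j', b⟩
  obtain rfl | hj := eq_or_ne j j'
  · simp only [Matrix.one_apply, Sigma.mk.injEq, heq_eq_eq, true_and, ← hP]
    rw [Finset.sum_comm]
    simp [vecBasis, Matrix.mul_apply, Fintype.sum_prod_type, apply_ite]
  · simp [vecBasis, Matrix.mul_apply, Fintype.sum_prod_type, hj, hj.symm, apply_ite]

variable [Fintype J] [∀ j, Fintype (d j)]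

theorem vecBasis_mulVec [CommSemiring R] (P : ∀ j, d j → Matrix m n R) (c : ((j : J) × d j) → R) :
    vecBasis P *ᵥ c = vec (blockRow fun j => ∑ a, c ⟨j, a⟩ • P j a) := by
  ext ⟨⟨j, l⟩, i⟩
  simp [vecBasis, blockRow, vec, mulVec, dotProduct, Fintype.sum_sigma, Matrix.sum_apply, mul_comm]

theorem forall_mem_span_iff_exists_vecBasis_mulVec [CommSemiring R] {P : ∀ j, d j → Matrix m n R}
    {E : J → Matrix m n R} :
    (∀ j, E j ∈ Submodule.span R (Set.range (P j))) ↔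
      ∃ c, vecBasis P *ᵥ c = vec (blockRow E) := by
  simp only [Submodule.mem_span_range_iff_exists_fun, vecBasis_mulVec, vec_inj]
  constructor
  · intro h
    choose c hc using h
    exact ⟨fun x => c x.1 x.2, congrArg blockRow (funext hc)⟩
  · rintro ⟨c, hc⟩ j
    exact ⟨fun a => c ⟨j, a⟩, Matrix.ext fun i l => congrFun₂ hc i (j, l)⟩

end VecBasis

section BackwardError

variable {J m n q s R : Type*} [Fintype J] [Fintype m] [Fintype n] [Fintype q] [DecidableEq J]
  [DecidableEq m]

theorem sum_perturbed_eq_zero_iff [CommRing R] (F E : J → Matrix m n R) (Φ : J → Matrix q s R)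
    (V : Matrix n q R) :
    ∑ j, (F j + E j) * V * Φ j = 0 ↔
      ((blockRow (fun j => (Φ j)ᵀ) * ((1 : Matrix J J R) ⊗ₖ Vᵀ)) ⊗ₖ (1 : Matrix m m R)) *ᵥ
        vec (blockRow E) = -vec (∑ j, F j * V * Φ j) := by
  simp only [kronecker_one_mulVec_vec_blockRow, ← vec_neg, vec_inj, Matrix.add_mul,
    Finset.sum_add_distrib, add_comm (∑ j, F j * V * Φ j), add_eq_zero_iff_eq_neg]

variable {d : J → Type*} [∀ j, Fintype (d j)] [∀ j, DecidableEq (d j)]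

theorem setOf_fnorm_blockRow_eq_image_vnorm (F : J → Matrix m n ℂ) (Φ : J → Matrix q s ℂ)
    (V : Matrix n q ℂ) {P : ∀ j, d j → Matrix m n ℂ}
    (hP : ∀ j a b, ∑ i, ∑ l, (starRingEnd ℂ) (P j a i l) * P j b i l = if a = b then 1 else 0) :
    {x : ℝ | ∃ δF : J → Matrix m n ℂ, (∀ j, δF j ∈ Submodule.span ℂ (Set.range (P j))) ∧
        ∑ j, (F j + δF j) * V * Φ j = 0 ∧ x = fnorm (blockRow δF)} =
      vnorm '' {c | (((blockRow (fun j => (Φ j)ᵀ) * ((1 : Matrix J J ℂ) ⊗ₖ Vᵀ)) ⊗ₖ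
        (1 : Matrix m m ℂ)) * vecBasis P) *ᵥ c = -vec (∑ j, F j * V * Φ j)} := by
  have hnorm {E c} (h : vecBasis P *ᵥ c = vec (blockRow E)) : vnorm c = fnorm (blockRow E) := by
    rw [fnorm_eq_vnorm_vec, ← h, vnorm_mulVec_of_conjTranspose_mul_self_eq_one
      (conjTranspose_vecBasis_mul_vecBasis hP)]
  simp only [sum_perturbed_eq_zero_iff, forall_mem_span_iff_exists_vecBasis_mulVec,
    ← mulVec_mulVec]
  ext x
  constructor
  · rintro ⟨E, ⟨c, hc⟩, hE, rfl⟩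
    exact ⟨c, (congrArg _ hc).trans hE, hnorm hc⟩
  · rintro ⟨c, hc, rfl⟩
    have hE := vecBasis_mulVec P c
    exact ⟨_, ⟨c, hE⟩, (congrArg _ hE.symm).trans hc, hnorm hE⟩

theorem structured_backward_error_invariant_pair_general [Fintype s]
    (F : J → Matrix m n ℂ) (Φ : J → Matrix q s ℂ) (V : Matrix n q ℂ)
    (P : ∀ j, d j → Matrix m n ℂ)
    (hP : ∀ j a b, ∑ i, ∑ l, (starRingEnd ℂ) (P j a i l) * P j b i l = if a = b then 1 else 0)
    (hfeasible : ∃ δF : J → Matrix m n ℂ, (∀ j, δF j ∈ Submodule.span ℂ (Set.range (P j))) ∧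
      ∑ j, (F j + δF j) * V * Φ j = 0)
    (Ghat : Matrix s (J × q) ℂ) (hGhat : ∀ i j t, Ghat i (j, t) = Φ j t i)
    (Mkr : Matrix s (J × n) ℂ) (hMkr : Mkr = Ghat * ((1 : Matrix J J ℂ) ⊗ₖ Vᵀ))
    (R : Matrix m s ℂ) (hR : R = ∑ j, F j * V * Φ j)
    (r : s × m → ℂ) (hr : ∀ i l, r (i, l) = R l i)
    (Pm : Matrix ((J × n) × m) ((j : J) × d j) ℂ)
    (hPm : ∀ jl i c, Pm (jl, i) c = if jl.1 = c.1 then P c.1 c.2 i jl.2 else 0) :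
    IsLeast
      {x : ℝ | ∃ δF : J → Matrix m n ℂ, (∀ j, δF j ∈ Submodule.span ℂ (Set.range (P j))) ∧
        ∑ j, (F j + δF j) * V * Φ j = 0 ∧ x = fnorm (blockRow δF)}
      (vnorm (pinv ((Mkr ⊗ₖ (1 : Matrix m m ℂ)) * Pm) *ᵥ r)) ∧
    vnorm (pinv ((Mkr ⊗ₖ (1 : Matrix m m ℂ)) * Pm) *ᵥ r) ≤
      (sigmaMinPos ((Mkr ⊗ₖ (1 : Matrix m m ℂ)) * Pm))⁻¹ * fnorm R := by
  obtain rfl : Ghat = blockRow fun j => (Φ j)ᵀ := by ext i ⟨j, t⟩; exact hGhat i j t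
  obtain rfl : r = vec R := by ext ⟨i, l⟩; exact hr i l
  obtain rfl : Pm = vecBasis P := by ext ⟨jl, i⟩ c; exact hPm jl i c
  subst hMkr hR
  refine ⟨?_, fnorm_eq_vnorm_vec (∑ j, F j * V * Φ j) ▸ vnorm_pinv_mulVec_le _ _⟩
  rw [setOf_fnorm_blockRow_eq_image_vnorm F Φ V hP, ← vnorm_neg, ← mulVec_neg]
  apply isLeast_vnorm_pinv_mulVec
  obtain ⟨δF, hmem, hzero⟩ := hfeasible
  obtain ⟨c, hc⟩ := forall_mem_span_iff_exists_vecBasis_mulVec.1 hmem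
  exact ⟨c, by rw [← mulVec_mulVec, hc, ← sum_perturbed_eq_zero_iff, hzero]⟩

end BackwardError

/-- Structured backward error for an invariant pair `(V, M)` (with `Φⱼ` playing the role of
`fⱼ(M)`) and coefficients in linear subspaces `𝒮ⱼ` with Frobenius-orthonormal bases: the
structured backward error is attained and equals
`‖[((Ĝ (I_k ⊗ Vᵀ)) ⊗ Iₙ) P]† vec R‖₂`, where `Ĝ = [Φ₁ᵀ, …, Φₖᵀ]` and `R = ∑ⱼ Fⱼ V Φⱼ`;
consequently `η_𝒮 ≤ σ_min(((Ĝ (I_k ⊗ Vᵀ)) ⊗ Iₙ) P)⁻¹ ‖R‖_F`. -/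
theorem structured_backward_error_invariant_pair (n k p : ℕ)
    (F : Fin k → Matrix (Fin n) (Fin n) ℂ)
    (Φ : Fin k → Matrix (Fin p) (Fin p) ℂ)
    (V : Matrix (Fin n) (Fin p) ℂ)
    (d : Fin k → ℕ)
    (P : (j : Fin k) → Fin (d j) → Matrix (Fin n) (Fin n) ℂ)
    (hP : ∀ j a b, ∑ m, ∑ l, (starRingEnd ℂ) (P j a m l) * P j b m l =
      if a = b then 1 else 0)
    (hF : ∀ j, F j ∈ Submodule.span ℂ (Set.range (P j)))
    (Ghat : Matrix (Fin p) (Fin k × Fin p) ℂ)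
    (hGhat : ∀ i j s, Ghat i (j, s) = Φ j s i)
    (Mkr : Matrix (Fin p) (Fin k × Fin n) ℂ)
    (hMkr : Mkr = Ghat * ((1 : Matrix (Fin k) (Fin k) ℂ) ⊗ₖ Vᵀ))
    (R : Matrix (Fin n) (Fin p) ℂ)
    (hR : R = ∑ j, F j * V * Φ j)
    (r : Fin p × Fin n → ℂ) (hr : ∀ i m, r (i, m) = R m i)
    (Pm : Matrix ((Fin k × Fin n) × Fin n) ((j : Fin k) × Fin (d j)) ℂ)
    (hPm : ∀ jl m c, Pm (jl, m) c = if jl.1 = c.1 then P c.1 c.2 m jl.2 else 0) :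
    IsLeast
      {x : ℝ | ∃ δF : Fin k → Matrix (Fin n) (Fin n) ℂ,
        (∀ j, δF j ∈ Submodule.span ℂ (Set.range (P j))) ∧
        (∑ j, (F j + δF j) * V * Φ j) = 0 ∧
        x = fnorm (Matrix.of fun (m : Fin n) (jl : Fin k × Fin n) => δF jl.1 m jl.2)}
      (vnorm ((pinv ((Mkr ⊗ₖ (1 : Matrix (Fin n) (Fin n) ℂ)) * Pm)).mulVec r)) ∧
    vnorm ((pinv ((Mkr ⊗ₖ (1 : Matrix (Fin n) (Fin n) ℂ)) * Pm)).mulVec r) ≤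
      (sigmaMinPos ((Mkr ⊗ₖ (1 : Matrix (Fin n) (Fin n) ℂ)) * Pm))⁻¹ * fnorm R :=
  structured_backward_error_invariant_pair_general F Φ V P hP
    ⟨-F, fun j => neg_mem (hF j), by simp⟩ Ghat hGhat Mkr hMkr R hR r hr Pm hPm
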